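/- arXiv:2009.10399 — 2 statements merged into one kernel-verified Lean document; each statement's English description precedes it below -/
import Mathlib

section
/- Let L, N be a lightlike frame along the unit-speed spacelike curve γ̂, and define the osculating lightlike surface f_L(u,v) = γ̂(u) + v L(u) and the transversal lightlike surface f_N(u,v) = γ̂(u) + v N(u) on I × ℝ. Then a point (u,v) is a singular point of f_L (i.e. the differential d(f_L)_{(u,v)} has rank < 2) if and only if 1 − v α_L(u) = 0, and (u,v) is a singular point of f_N if and only if 1 − v α_N(u) = 0. -/
open scoped Topology

noncomputable section

/-- Points/vectors of Lorentz–Minkowski 3-space `ℝ³₁`. -/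
abbrev R3 : Type := Fin 3 → ℝ

/-- The Lorentz–Minkowski scalar product `⟨x,y⟩ = -x₀y₀ + x₁y₁ + x₂y₂`. -/
def mink (x y : R3) : ℝ := -(x 0 * y 0) + x 1 * y 1 + x 2 * y 2

/-- `(L, N)` is a lightlike frame along the unit-speed spacelike curve `γ` on `I`:
`γ, L, N` are smooth on `I`, `⟨e,e⟩ = 1` (with `e = γ'`), `⟨e,L⟩ = ⟨e,N⟩ = 0`,
`⟨L,L⟩ = ⟨N,N⟩ = 0` and `⟨L,N⟩ = 1` on `I`. -/
structure LightlikeFrame (I : Set ℝ) (γ L N : ℝ → R3) : Prop where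
  smooth_gamma : ContDiffOn ℝ (⊤ : ℕ∞) γ I
  smooth_L : ContDiffOn ℝ (⊤ : ℕ∞) L I
  smooth_N : ContDiffOn ℝ (⊤ : ℕ∞) N I
  unit_speed : ∀ u ∈ I, mink (deriv γ u) (deriv γ u) = 1
  eL : ∀ u ∈ I, mink (deriv γ u) (L u) = 0
  eN : ∀ u ∈ I, mink (deriv γ u) (N u) = 0
  LL : ∀ u ∈ I, mink (L u) (L u) = 0
  NN : ∀ u ∈ I, mink (N u) (N u) = 0
  LN : ∀ u ∈ I, mink (L u) (N u) = 1

/-- `α_L = ⟨γ'', L⟩`. -/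
def alphaL (γ L : ℝ → R3) (u : ℝ) : ℝ := mink (deriv (deriv γ) u) (L u)

/-- `α_N = ⟨γ'', N⟩`. -/
def alphaN (γ N : ℝ → R3) (u : ℝ) : ℝ := mink (deriv (deriv γ) u) (N u)

/-- `α_G = ⟨L, N'⟩`. -/
def alphaG (L N : ℝ → R3) (u : ℝ) : ℝ := mink (L u) (deriv N u)

/-- `σ_L = α_L' + α_L α_G`. -/
def sigmaL (γ L N : ℝ → R3) (u : ℝ) : ℝ :=
  deriv (alphaL γ L) u + alphaL γ L u * alphaG L N u

/-- `σ_N = α_N' - α_N α_G`. -/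
def sigmaN (γ L N : ℝ → R3) (u : ℝ) : ℝ :=
  deriv (alphaN γ N) u - alphaN γ N u * alphaG L N u

theorem mink_comm (x y : R3) : mink x y = mink y x := by
  simp only [mink]; ring

theorem mink_add_left (x y z : R3) : mink (x + y) z = mink x z + mink y z := by
  simp only [mink, Pi.add_apply]; ring

theorem mink_smul_left (c : ℝ) (x y : R3) : mink (c • x) y = c * mink x y := by
  simp only [mink, Pi.smul_apply, smul_eq_mul]; ring

theorem mink_zero_left (x : R3) : mink 0 x = 0 := by
  simp [mink]

theorem HasDerivAt.mink {x y : ℝ → R3} {x' y' : R3} {u : ℝ}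
    (hx : HasDerivAt x x' u) (hy : HasDerivAt y y' u) :
    HasDerivAt (fun t => mink (x t) (y t)) (mink x' (y u) + mink (x u) y') u := by
  have hx := hasDerivAt_pi.1 hx
  have hy := hasDerivAt_pi.1 hy
  refine ((((hx 0).mul (hy 0)).neg.add ((hx 1).mul (hy 1))).add
    ((hx 2).mul (hy 2))).congr_deriv ?_
  simp only [_root_.mink]; ring

/-- Expansion of a vector in a frame consisting of a unit vector and two null vectors. -/
theorem eq_expansion_of_lightlike_basis {e l n : R3} (ee : mink e e = 1) (el : mink e l = 0)
    (en : mink e n = 0) (ll : mink l l = 0) (nn : mink n n = 0) (ln : mink l n = 1) (x : R3) :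
    x = mink x e • e + mink x n • l + mink x l • n := by
  let A : Matrix (Fin 3) (Fin 3) ℝ := !![-e 0, e 1, e 2; -n 0, n 1, n 2; -l 0, l 1, l 2]
  let B : Matrix (Fin 3) (Fin 3) ℝ := !![e 0, l 0, n 0; e 1, l 1, n 1; e 2, l 2, n 2]
  have hAB : A * B = 1 := by
    simp only [mink] at ee el en ll nn ln
    ext i j
    fin_cases i <;> fin_cases j <;>
      simp [A, B, Matrix.mul_apply, Fin.sum_univ_three] <;> linarith
  have hx : B.mulVec (A.mulVec x) = x := by
    rw [Matrix.mulVec_mulVec, mul_eq_one_comm.1 hAB, Matrix.one_mulVec]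
  refine hx.symm.trans ?_
  ext i
  fin_cases i <;>
    simp [A, B, Matrix.mulVec, dotProduct, Fin.sum_univ_three, mink] <;> ring

theorem LinearMap.rank_lt_two_iff_not_injective (f : ℝ × ℝ →ₗ[ℝ] R3) :
    f.rank < 2 ↔ ¬ Function.Injective f := by
  have h := f.finrank_range_add_finrank_ker
  have h2 : Module.finrank ℝ (ℝ × ℝ) = 2 := by simp
  rw [← LinearMap.ker_eq_bot, ← Submodule.finrank_eq_zero (R := ℝ), LinearMap.rank,
    ← Module.finrank_eq_rank]
  norm_cast
  omega

theorem LightlikeFrame.swap {I : Set ℝ} {γ L N : ℝ → R3} (h : LightlikeFrame I γ L N) :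
    LightlikeFrame I γ N L where
  smooth_gamma := h.smooth_gamma
  smooth_L := h.smooth_N
  smooth_N := h.smooth_L
  unit_speed := h.unit_speed
  eL := h.eN
  eN := h.eL
  LL := h.NN
  NN := h.LL
  LN u hu := by rw [mink_comm, h.LN u hu]

theorem fderiv_ruled_apply {γ L : ℝ → R3} {u : ℝ} (hγ : DifferentiableAt ℝ γ u)
    (hL : DifferentiableAt ℝ L u) (v : ℝ) (p : ℝ × ℝ) :
    fderiv ℝ (fun p : ℝ × ℝ => γ p.1 + p.2 • L p.1) (u, v) p =
      p.1 • (deriv γ u + v • deriv L u) + p.2 • L u := by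
  have h1 : HasFDerivAt (fun p : ℝ × ℝ => p.1) (ContinuousLinearMap.fst ℝ ℝ ℝ) (u, v) :=
    hasFDerivAt_fst
  have h2 : HasFDerivAt (fun p : ℝ × ℝ => p.2) (ContinuousLinearMap.snd ℝ ℝ ℝ) (u, v) :=
    hasFDerivAt_snd
  have hγ' := hγ.hasDerivAt.hasFDerivAt.comp (u, v) h1
  have hL' := hL.hasDerivAt.hasFDerivAt.comp (u, v) h1
  have h := (hγ'.add (h2.smul hL')).fderiv
  refine (congrArg (fun T : ℝ × ℝ →L[ℝ] R3 => T p) h).trans ?_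
  simp only [add_apply, ContinuousLinearMap.comp_apply,
    smul_apply, ContinuousLinearMap.smulRight_apply,
    ContinuousLinearMap.coe_fst', ContinuousLinearMap.coe_snd', Function.comp_apply,
    ContinuousLinearMap.toSpanSingleton_apply]
  module

theorem LightlikeFrame.rank_fderiv_lt_two_iff {I : Set ℝ} (hI : IsOpen I) {γ L N : ℝ → R3}
    (h : LightlikeFrame I γ L N) {u : ℝ} (hu : u ∈ I) (v : ℝ) :
    ((fderiv ℝ (fun p : ℝ × ℝ => γ p.1 + p.2 • L p.1) (u, v)).toLinearMap).rank < 2 ↔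
      1 - v * alphaL γ L u = 0 := by
  have hmem := hI.mem_nhds hu
  have hγ : DifferentiableAt ℝ γ u := (h.smooth_gamma.contDiffAt hmem).differentiableAt (by simp)
  have hL : DifferentiableAt ℝ L u := (h.smooth_L.contDiffAt hmem).differentiableAt (by simp)
  have hγ' : DifferentiableAt ℝ (deriv γ) u :=
    ((h.smooth_gamma.deriv_of_isOpen (m := 1) hI (by norm_cast)).contDiffAt
      hmem).differentiableAt (by simp)
  have heL' : alphaL γ L u + mink (deriv γ u) (deriv L u) = 0 :=
    (hγ'.hasDerivAt.mink hL.hasDerivAt).unique <| (hasDerivAt_const u (0 : ℝ)).congr_of_eventuallyEq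
      (Filter.eventually_of_mem hmem h.eL)
  have hLL' : mink (deriv L u) (L u) + mink (L u) (deriv L u) = 0 :=
    (hL.hasDerivAt.mink hL.hasDerivAt).unique <| (hasDerivAt_const u (0 : ℝ)).congr_of_eventuallyEq
      (Filter.eventually_of_mem hmem h.LL)
  set X : R3 := deriv γ u + v • deriv L u with hX
  have hXL : mink X (L u) = 0 := by
    rw [mink_comm (L u)] at hLL'
    rw [hX, mink_add_left, mink_smul_left, h.eL u hu, show mink (deriv L u) (L u) = 0 by linarith]
    ring
  have hXe : mink X (deriv γ u) = 1 - v * alphaL γ L u := by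
    rw [hX, mink_add_left, mink_smul_left, h.unit_speed u hu, mink_comm (deriv L u)]
    linear_combination v * heL'
  have hexp := eq_expansion_of_lightlike_basis (h.unit_speed u hu) (h.eL u hu) (h.eN u hu)
    (h.LL u hu) (h.NN u hu) (h.LN u hu) X
  rw [LinearMap.rank_lt_two_iff_not_injective, not_iff_comm, injective_iff_map_eq_zero]
  simp only [ContinuousLinearMap.coe_coe, fderiv_ruled_apply hγ hL, ← hX]
  rw [← hXe]
  constructor
  · rintro hne ⟨p, q⟩ hpq
    have hp : p = 0 := by
      have := congrArg (mink · (deriv γ u)) hpq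
      simpa [mink_add_left, mink_smul_left, mink_zero_left, mink_comm (L u), h.eL u hu, hne]
        using this
    have hq : q = 0 := by
      have := congrArg (mink · (N u)) hpq
      simpa [mink_add_left, mink_smul_left, mink_zero_left, h.LN u hu, hp] using this
    rw [hp, hq, Prod.mk_zero_zero]
  · intro hinj h0
    rw [h0, hXL, zero_smul, zero_smul, zero_add, add_zero] at hexp
    have := hinj (1, -mink X (N u)) (by
      rw [one_smul, neg_smul, ← hexp, add_neg_cancel])
    simp at this

/-- `(u,v)` is a singular point of the osculating lightlike surface
`f_L(u,v) = γ̂(u) + v L(u)` (i.e. the differential has rank `< 2`) iff `1 - v α_L(u) = 0`,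
and similarly for the transversal lightlike surface `f_N(u,v) = γ̂(u) + v N(u)`. -/
theorem singular_points_of_lightlike_surfaces (a b : ℝ) (γ L N : ℝ → R3)
    (hframe : LightlikeFrame (Set.Ioo a b) γ L N) :
    ∀ u ∈ Set.Ioo a b, ∀ v : ℝ,
      (((fderiv ℝ (fun p : ℝ × ℝ => γ p.1 + p.2 • L p.1) (u, v)).toLinearMap).rank < 2 ↔
        1 - v * alphaL γ L u = 0) ∧
      (((fderiv ℝ (fun p : ℝ × ℝ => γ p.1 + p.2 • N p.1) (u, v)).toLinearMap).rank < 2 ↔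
        1 - v * alphaN γ N u = 0) := by
  intro u hu v
  exact ⟨hframe.rank_fderiv_lt_two_iff isOpen_Ioo hu v,
    hframe.swap.rank_fderiv_lt_two_iff isOpen_Ioo hu v⟩
end
end

section
/- Let L, N be a lightlike frame along the unit-speed spacelike curve γ̂ and fix u ∈ I; assume the first components L₀(u) of L(u) and N₀(u) of N(u) are nonzero. Let ṽ = (1, v₁, v₂) with v₁² + v₂² = 1 (so ṽ is lightlike). Then ⟨e(u), ṽ⟩ = 0 if and only if ṽ = L(u)/L₀(u) or ṽ = N(u)/N₀(u). -/
open scoped Topology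

noncomputable section

theorem mink_smul_right (c : ℝ) (x y : R3) : mink x (c • y) = c * mink x y := by
  simp only [mink, Pi.smul_apply, smul_eq_mul]
  ring

/-- The determinant of three vectors of `ℝ³₁`, written as a triple product. -/
def tripleProduct (x y z : R3) : ℝ :=
  x 0 * (y 1 * z 2 - y 2 * z 1) - x 1 * (y 0 * z 2 - y 2 * z 0) + x 2 * (y 0 * z 1 - y 1 * z 0)

/-- Three vectors orthogonal to a common unit spacelike vector are linearly dependent. -/
theorem tripleProduct_eq_zero_of_mink_eq_zero {e x y z : R3} (he : mink e e = 1)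
    (hx : mink e x = 0) (hy : mink e y = 0) (hz : mink e z = 0) : tripleProduct x y z = 0 := by
  simp only [mink] at he hx hy hz
  have h0 : e 0 * tripleProduct x y z = 0 := by
    unfold tripleProduct
    linear_combination -(y 1 * z 2 - y 2 * z 1) * hx + (x 1 * z 2 - x 2 * z 1) * hy
      - (x 1 * y 2 - x 2 * y 1) * hz
  have h1 : e 1 * tripleProduct x y z = 0 := by
    unfold tripleProduct
    linear_combination -(y 0 * z 2 - y 2 * z 0) * hx + (x 0 * z 2 - x 2 * z 0) * hy
      - (x 0 * y 2 - x 2 * y 0) * hz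
  have h2 : e 2 * tripleProduct x y z = 0 := by
    unfold tripleProduct
    linear_combination (y 0 * z 1 - y 1 * z 0) * hx - (x 0 * z 1 - x 1 * z 0) * hy
      + (x 0 * y 1 - x 1 * y 0) * hz
  linear_combination -tripleProduct x y z * he - e 0 * h0 + e 1 * h1 + e 2 * h2

/-- The Gram determinant of three lightlike vectors. -/
theorem two_mul_mink_mul_mink_mul_mink {x y z : R3} (hx : mink x x = 0) (hy : mink y y = 0)
    (hz : mink z z = 0) :
    2 * mink x y * mink y z * mink x z = -tripleProduct x y z ^ 2 := by
  have gram : mink x x * (mink y y * mink z z - mink y z ^ 2)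
      - mink x y * (mink x y * mink z z - mink y z * mink x z)
      + mink x z * (mink x y * mink y z - mink y y * mink x z) = -tripleProduct x y z ^ 2 := by
    simp only [mink, tripleProduct]
    ring
  rw [hx, hy, hz] at gram
  linear_combination gram

/-- Orthogonal lightlike vectors are proportional. -/
theorem eq_inv_smul_of_mink_eq_zero {x : R3} (hx0 : x 0 ≠ 0) (hx : mink x x = 0) {v₁ v₂ : ℝ}
    (hv : v₁ ^ 2 + v₂ ^ 2 = 1) (h : mink x ![1, v₁, v₂] = 0) :
    (![1, v₁, v₂] : R3) = (x 0)⁻¹ • x := by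
  simp [mink] at hx h
  have hsq : (x 1 - x 0 * v₁) ^ 2 + (x 2 - x 0 * v₂) ^ 2 = 0 := by
    linear_combination hx - 2 * x 0 * h + x 0 ^ 2 * hv
  have h1 : x 1 = x 0 * v₁ := by nlinarith [sq_nonneg (x 1 - x 0 * v₁), sq_nonneg (x 2 - x 0 * v₂)]
  have h2 : x 2 = x 0 * v₂ := by nlinarith [sq_nonneg (x 1 - x 0 * v₁), sq_nonneg (x 2 - x 0 * v₂)]
  ext i
  fin_cases i <;> simp [h1, h2, hx0]

/-- For a lightlike vector `ṽ = (1, v₁, v₂)` with `v₁² + v₂² = 1`,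
`⟨e(u), ṽ⟩ = 0` iff `ṽ = L(u)/L₀(u)` or `ṽ = N(u)/N₀(u)`. -/
theorem lightlike_directions (a b : ℝ) (γ L N : ℝ → R3)
    (hframe : LightlikeFrame (Set.Ioo a b) γ L N)
    (u : ℝ) (hu : u ∈ Set.Ioo a b)
    (hL0 : L u 0 ≠ 0) (hN0 : N u 0 ≠ 0)
    (v₁ v₂ : ℝ) (hv : v₁ ^ 2 + v₂ ^ 2 = 1) :
    mink (deriv γ u) ![1, v₁, v₂] = 0 ↔
      (![1, v₁, v₂] : R3) = (L u 0)⁻¹ • L u ∨ (![1, v₁, v₂] : R3) = (N u 0)⁻¹ • N u := by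
  have he := hframe.unit_speed u hu
  have heL := hframe.eL u hu
  have heN := hframe.eN u hu
  have hLL := hframe.LL u hu
  have hNN := hframe.NN u hu
  constructor
  · intro h
    have hvv : mink ![1, v₁, v₂] ![1, v₁, v₂] = 0 := by
      simp [mink]
      linear_combination hv
    have hprod := two_mul_mink_mul_mink_mul_mink hLL hNN hvv
    rw [tripleProduct_eq_zero_of_mink_eq_zero he heL heN h, hframe.LN u hu] at hprod
    have hzero : mink (N u) ![1, v₁, v₂] * mink (L u) ![1, v₁, v₂] = 0 := by
      linear_combination hprod / 2
    rcases mul_eq_zero.mp hzero with hN | hL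
    · exact Or.inr (eq_inv_smul_of_mink_eq_zero hN0 hNN hv hN)
    · exact Or.inl (eq_inv_smul_of_mink_eq_zero hL0 hLL hv hL)
  · rintro (h | h)
    · rw [h, mink_smul_right, heL, mul_zero]
    · rw [h, mink_smul_right, heN, mul_zero]
end
end
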